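/- Let $k$ be a field, $n \ge 1$, $1 \le i \le n$, $\ell \in \{0,1\}$, and let $c = (c_1,\dots,c_n) \in k^n$ with $c_i \neq 0$ and $c_i \neq 1$. The $k$-algebra homomorphism from the polynomial ring $k[T_1,\dots,T_n]$ to the polynomial ring $k[Y_1,\dots,Y_{n+1}]$ sending $T_j \mapsto Y_j$ for $j \neq i$ and $T_i \mapsto (1-(1-c_i)(1-Y_{n+1}))\,Y_i$ if $\ell = 0$, respectively $T_i \mapsto 1-(1-c_i)\,Y_i\,(1-Y_{n+1})$ if $\ell = 1$, makes $k[Y_1,\dots,Y_{n+1}]$ a flat $k[T_1,\dots,T_n]$-module; equivalently, the morphism $H^{n+1}_{(\ell),c,i} : \mathbb{A}^{n+1}_k \to \mathbb{A}^n_k$ is flat. -/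

import Mathlib

section HFlatAux
open MvPolynomial

attribute [local instance] MvPolynomial.algebraMvPolynomial in
lemma flat_mvPolynomial_map {R S σ : Type*} [CommRing R] [CommRing S] (f : R →+* S)
    (hf : f.Flat) : (MvPolynomial.map (σ := σ) f).Flat := by
  algebraize [f]
  have h := (inferInstance :
    Algebra.IsPushout R (MvPolynomial σ R) S (MvPolynomial σ S)).out
  have := Module.Flat.isBaseChange (R := R) (S := MvPolynomial σ R) (M := S)
    (MvPolynomial σ S) h
  exact RingHom.flat_algebraMap_iff.mpr this

lemma flat_of_retraction {k B : Type*} [Field k] [CommRing B] [IsDomain B] [Algebra k B]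
    (p : B) (ψ : B →ₐ[k] Polynomial k) (h : ψ p = Polynomial.X) :
    (Polynomial.aeval (R := k) p).toRingHom.Flat := by
  have hinj : Function.Injective (Polynomial.aeval (R := k) p).toRingHom := by
    have : ψ.comp (Polynomial.aeval p) = AlgHom.id k _ := by
      ext; simp [h]
    exact Function.LeftInverse.injective (g := ψ) (fun x => DFunLike.congr_fun this x)
  algebraize [(Polynomial.aeval (R := k) p).toRingHom]
  have : FaithfulSMul (Polynomial k) B := (faithfulSMul_iff_algebraMap_injective _ _).mpr hinj
  have : Module.IsTorsionFree (Polynomial k) B := inferInstance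
  exact inferInstanceAs (Module.Flat (Polynomial k) B)

/-- separating the `i`-th variable -/
noncomputable def srcMap (k : Type*) [Field k] {n : ℕ} (i : Fin n) :
    MvPolynomial (Fin n) k →ₐ[k] MvPolynomial {j : Fin n // j ≠ i} (Polynomial k) :=
  aeval (fun j => if h : j = i then C Polynomial.X else X ⟨j, h⟩)

lemma srcMap_bijective (k : Type*) [Field k] {n : ℕ} (i : Fin n) :
    Function.Bijective (srcMap k i) := by
  let g : MvPolynomial {j : Fin n // j ≠ i} (Polynomial k) →+* MvPolynomial (Fin n) k :=
    eval₂Hom (Polynomial.aeval (R := k) (X i : MvPolynomial (Fin n) k)).toRingHom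
      (fun j => X j.1)
  have h1 : g.comp (srcMap k i).toRingHom = RingHom.id _ := by
    apply MvPolynomial.ringHom_ext
    · intro r
      simp [g, srcMap, MvPolynomial.algebraMap_eq, MvPolynomial.algebraMap_apply]
    · intro j
      by_cases h : j = i <;> simp [g, srcMap, h]
  have h2 : (srcMap k i).toRingHom.comp g = RingHom.id _ := by
    apply MvPolynomial.ringHom_ext'
    · apply Polynomial.ringHom_ext
      · intro r
        simp [g, srcMap, MvPolynomial.algebraMap_eq, MvPolynomial.algebraMap_apply]
      · simp [g, srcMap]
    · rintro ⟨j, h⟩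
      simp [g, srcMap, h]
  exact Function.bijective_iff_has_inverse.mpr
    ⟨g, fun x => DFunLike.congr_fun h1 x, fun x => DFunLike.congr_fun h2 x⟩

/-- recombining the variables -/
noncomputable def tgtMap (k : Type*) [Field k] {n : ℕ} (i : Fin n) :
    MvPolynomial {j : Fin n // j ≠ i} (MvPolynomial (Fin 2) k) →+*
      MvPolynomial (Fin (n + 1)) k :=
  eval₂Hom (aeval (R := k)
    (![X i.castSucc, X (Fin.last n)] : Fin 2 → MvPolynomial (Fin (n + 1)) k)).toRingHom
    (fun j => X j.1.castSucc)

lemma tgtMap_bijective (k : Type*) [Field k] {n : ℕ} (i : Fin n) :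
    Function.Bijective (tgtMap k i) := by
  let g : MvPolynomial (Fin (n + 1)) k →ₐ[k]
      MvPolynomial {j : Fin n // j ≠ i} (MvPolynomial (Fin 2) k) :=
    aeval (Fin.lastCases (C (X 1)) (fun j => if h : j = i then C (X 0) else X ⟨j, h⟩))
  have h1 : g.toRingHom.comp (tgtMap k i) = RingHom.id _ := by
    apply MvPolynomial.ringHom_ext'
    · apply MvPolynomial.ringHom_ext
      · intro r
        simp [g, tgtMap, MvPolynomial.algebraMap_eq, MvPolynomial.algebraMap_apply]
      · intro j
        fin_cases j <;> simp [g, tgtMap]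
    · rintro ⟨j, h⟩
      simp [g, tgtMap, h]
  have h2 : (tgtMap k i).comp g.toRingHom = RingHom.id _ := by
    apply MvPolynomial.ringHom_ext
    · intro r
      simp [g, tgtMap, MvPolynomial.algebraMap_eq, MvPolynomial.algebraMap_apply]
    · intro j
      induction j using Fin.lastCases with
      | last => simp [g, tgtMap]
      | cast j => by_cases h : j = i <;> simp [g, tgtMap, h]
  exact Function.bijective_iff_has_inverse.mpr
    ⟨g, fun x => DFunLike.congr_fun h1 x, fun x => DFunLike.congr_fun h2 x⟩

lemma flat_aux (k : Type*) [Field k] {n : ℕ} (i : Fin n) (p : MvPolynomial (Fin 2) k)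
    (ψ : MvPolynomial (Fin 2) k →ₐ[k] Polynomial k) (h : ψ p = Polynomial.X)
    (f : MvPolynomial (Fin n) k →ₐ[k] MvPolynomial (Fin (n + 1)) k)
    (hfi : f (X i) = aeval (R := k)
      (![X i.castSucc, X (Fin.last n)] : Fin 2 → MvPolynomial (Fin (n + 1)) k) p)
    (hf : ∀ j, j ≠ i → f (X j) = X j.castSucc) : f.toRingHom.Flat := by
  have key : f.toRingHom = ((tgtMap k i).comp
      (MvPolynomial.map (Polynomial.aeval (R := k) p).toRingHom)).comp
        (srcMap k i).toRingHom := by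
    apply MvPolynomial.ringHom_ext
    · intro r
      have : f (C r) = C r := f.commutes r
      simp [this, tgtMap, srcMap, MvPolynomial.algebraMap_eq, MvPolynomial.algebraMap_apply]
    · intro j
      by_cases hj : j = i
      · subst hj
        simp [hfi, tgtMap, srcMap]
      · simp [hf j hj, tgtMap, srcMap, hj]
  rw [key]
  exact (RingHom.Flat.of_bijective (srcMap_bijective k i)).comp
    ((flat_mvPolynomial_map _ (flat_of_retraction p ψ h)).comp
      (RingHom.Flat.of_bijective (tgtMap_bijective k i)))

end HFlatAux


open MvPolynomial in
/-- For `1 ≤ i ≤ n`, `ℓ ∈ {0,1}` and `c ∈ kⁿ` with `c_i ≠ 0, 1`, the `k`-algebra map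
`k[T₁,…,Tₙ] → k[Y₁,…,Y_{n+1}]` sending `T_j ↦ Y_j` for `j ≠ i` and
`T_i ↦ (1-(1-c_i)(1-Y_{n+1}))·Y_i` if `ℓ = 0`, resp. `T_i ↦ 1-(1-c_i)·Y_i·(1-Y_{n+1})`
if `ℓ = 1`, is flat; i.e. the morphism `H^{n+1}_{(ℓ),c,i} : 𝔸^{n+1}_k → 𝔸ⁿ_k` is flat. -/
theorem H_flat (k : Type*) [Field k] (n : ℕ) (hn : 1 ≤ n) (i : Fin n) (ℓ : Fin 2)
    (c : Fin n → k) (hc0 : c i ≠ 0) (hc1 : c i ≠ 1) :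
    RingHom.Flat (MvPolynomial.aeval (R := k)
      (fun j : Fin n => if j = i then
          (if ℓ = 0 then (1 - C (1 - c i) * (1 - X (Fin.last n))) * X i.castSucc
            else 1 - C (1 - c i) * X i.castSucc * (1 - X (Fin.last n)))
        else (X j.castSucc : MvPolynomial (Fin (n + 1)) k))).toRingHom := by
  by_cases hℓ : ℓ = 0
  · refine flat_aux k i ((1 - C (1 - c i) * (1 - X 1)) * X 0)
      (aeval ![Polynomial.X, 1]) (by simp) _ (by simp [hℓ]) ?_
    intro j hj
    simp [hj]
  · refine flat_aux k i (1 - C (1 - c i) * X 0 * (1 - X 1))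
      (aeval ![Polynomial.C (1 - c i)⁻¹ * (1 - Polynomial.X), 0]) ?_ _ (by simp [hℓ]) ?_
    · have h1 : (1 - c i) ≠ 0 := sub_ne_zero.mpr (Ne.symm hc1)
      have h2 : (Polynomial.C (1 - c i) * Polynomial.C (1 - c i)⁻¹ : Polynomial k) = 1 := by
        rw [← Polynomial.C_mul, mul_inv_cancel₀ h1, Polynomial.C_1]
      simp only [map_sub, map_one, map_mul, aeval_X, Matrix.cons_val_zero, Matrix.cons_val_one,
        sub_zero, mul_one, ← mul_assoc, algHom_C, Polynomial.algebraMap_eq]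
      rw [← Polynomial.C_1, ← Polynomial.C_sub, h2]
      simp
    · intro j hj
      simp [hj]
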